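/- arXiv:2105.12956 — 2 statements merged into one kernel-verified Lean document; each statement's English description precedes it below -/
import Mathlib

section
/- If a system of homogeneous polynomials F₁,…,F_R of degree d in n variables over ℤ is non-singular (i.e. the Jacobian matrix J_F(x) has rank R for every nonzero complex x with F(x)=0), then the Birch singular locus V_F* = {x ∈ 𝔸^n : rank J_F(x) < R} has dimension at most R. -/
/-!
The Birch singular locus `V*` is a cone, cut out by the homogeneous ideal `I` of maximal minors of
the Jacobian. At a nonzero common zero of `F₁, …, F_R` some maximal minor is nonzero
(`Matrix.exists_submatrix_det_ne_zero`), so the `R` equations `Fᵢ = 0` cut `V*` down to at most the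
origin, and an intersection with `R` hypersurfaces can lower the dimension by at most `R`.

The last step is carried out through Noether normalisation: the map `x ↦ (F₁(x), …, F_R(x))` from
`V*` to affine `R`-space is finite. By the Nullstellensatz, `I + (F₁, …, F_R)` contains a power of
the irrelevant ideal (`exists_pow_idealOfVars_le`). Graded Nakayama then shows that the coordinate
ring of `V*` is spanned over `ℂ[y₁, …, y_R]`, with `yᵢ` acting as `Fᵢ`, by the finitely many
monomials of small degree (`finite_aeval_mk`). Strict inclusions of primes stay strict after contraction along an integral
map, so the dimension is at most that of `ℂ[y₁, …, y_R]`, which is `R`.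
-/


/-- Base change of an integer multivariate polynomial to `ℂ`. -/
noncomputable def complexify {n : ℕ} (F : MvPolynomial (Fin n) ℤ) :
    MvPolynomial (Fin n) ℂ :=
  MvPolynomial.map (Int.castRingHom ℂ) F

/-- The ideal generated by all `R × R` minors of the Jacobian matrix of the system `F`;
its zero locus is the Birch singular locus `V_F* = {x : rank J_F(x) < R}`. -/
noncomputable def birchSingularIdeal (n R : ℕ) (F : Fin R → MvPolynomial (Fin n) ℤ) :
    Ideal (MvPolynomial (Fin n) ℂ) :=
  Ideal.span { g | ∃ c : Fin R → Fin n, Function.Injective c ∧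
      g = Matrix.det (Matrix.of fun i k : Fin R =>
            MvPolynomial.pderiv (c k) (complexify (F i))) }

/-- Incomparability of primes in an integral extension, read as a bound on dimension. No
injectivity is needed. -/
theorem ringKrullDim_le_of_finite {A B : Type*} [CommRing A] [CommRing B] (f : A →+* B)
    (hf : f.Finite) : ringKrullDim B ≤ ringKrullDim A := by
  algebraize [f]
  have : Algebra.IsIntegral A B := Algebra.IsIntegral.of_finite A B
  refine Order.krullDim_le_of_strictMono (PrimeSpectrum.comap (algebraMap A B)) ?_
  intro p q hpq
  exact Ideal.IsIntegral.comap_lt_comap (R := A) (I := p.asIdeal) (J := q.asIdeal) hpq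

/-- A matrix over a field whose rank is its number of rows has a nonzero maximal minor. -/
theorem Matrix.exists_submatrix_det_ne_zero {K : Type*} [Field K] {r n : ℕ}
    (A : Matrix (Fin r) (Fin n) K) (hA : A.rank = r) :
    ∃ c : Fin r → Fin n, Function.Injective c ∧ (A.submatrix id c).det ≠ 0 := by
  obtain ⟨κ, a, ha, hspan, hli⟩ := exists_linearIndependent' K A.col
  have : Finite κ := Finite.of_injective a ha
  have : Fintype κ := Fintype.ofFinite κ
  have hcard : Fintype.card κ = r := by
    rw [linearIndependent_iff_card_eq_finrank_span.1 hli, Set.finrank, hspan,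
      ← Matrix.rank_eq_finrank_span_cols, hA]
  let e : Fin r ≃ κ := (Fintype.equivFinOfCardEq hcard).symm
  refine ⟨a ∘ e, ha.comp e.injective, ?_⟩
  have h : LinearIndependent K (A.submatrix id (a ∘ e)).col := hli.comp e e.injective
  rw [Matrix.linearIndependent_cols_iff_isUnit, Matrix.isUnit_iff_isUnit_det] at h
  exact h.ne_zero

namespace MvPolynomial

attribute [local instance] MvPolynomial.gradedAlgebra

theorem homogeneousComponent_mul_of_isHomogeneous {σ K : Type*} [CommRing K]
    {f : MvPolynomial σ K} {d e : ℕ} (hf : f.IsHomogeneous d) (hde : d ≤ e)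
    (g : MvPolynomial σ K) :
    homogeneousComponent e (g * f) = homogeneousComponent (e - d) g * f := by
  have h := DirectSum.coe_decompose_mul_of_right_mem_of_le (homogeneousSubmodule σ K) (a := g)
    (i := d) (n := e) hf hde
  have hc (p : MvPolynomial σ K) (i : ℕ) :
      (DirectSum.decompose (homogeneousSubmodule σ K) p i : MvPolynomial σ K) =
        homogeneousComponent i p := decomposition.decompose'_apply p i
  rwa [hc, hc] at h

/-- The Nullstellensatz for an ideal whose zero locus is contained in the origin; the locus may
also be empty. -/
theorem exists_pow_idealOfVars_le {σ K : Type*} [Finite σ] [Field K] [IsAlgClosed K]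
    (J : Ideal (MvPolynomial σ K)) (hJ : ∀ x : σ → K, (∀ p ∈ J, eval x p = 0) → x = 0) :
    ∃ N : ℕ, idealOfVars σ K ^ N ≤ J := by
  refine Ideal.exists_pow_le_of_le_radical_of_fg ?_ (idealOfVars_fg σ K)
  rw [← vanishingIdeal_zeroLocus_eq_radical (K := K), Ideal.span_le]
  rintro _ ⟨j, rfl⟩ x hx
  have h0 : x = 0 := hJ x fun p hp => by simpa using hx p hp
  simp [h0]

/-- Graded Nakayama: if a homogeneous ideal `I` and forms `f i` of degree `d` together contain a
power of the irrelevant ideal, then the quotient by `I` is finite over the polynomial ring acting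
through the `f i`, because monomials of small degree span it. -/
theorem finite_aeval_mk {σ ι K : Type*} [Finite σ] [Fintype ι] [CommRing K]
    (I : Ideal (MvPolynomial σ K)) (hI : I.IsHomogeneous (homogeneousSubmodule σ K))
    (f : ι → MvPolynomial σ K) {d N : ℕ} (hd : 0 < d) (hf : ∀ i, (f i).IsHomogeneous d)
    (hN : idealOfVars σ K ^ N ≤ I ⊔ Ideal.span (Set.range f)) :
    (aeval (fun i => Ideal.Quotient.mk I (f i)) :
      MvPolynomial ι K →ₐ[K] MvPolynomial σ K ⧸ I).toRingHom.Finite := by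
  let φ : MvPolynomial ι K →ₐ[K] MvPolynomial σ K ⧸ I :=
    aeval (fun i => Ideal.Quotient.mk I (f i))
  let : Algebra (MvPolynomial ι K) (MvPolynomial σ K ⧸ I) := φ.toRingHom.toAlgebra
  have hsmul (a : MvPolynomial ι K) (b : MvPolynomial σ K ⧸ I) : a • b = φ a * b := rfl
  -- Degrees from `D` on lie both in the range of `hN` and above `d`.
  let D := max N d
  let S : Set (MvPolynomial σ K ⧸ I) :=
    (fun s : σ →₀ ℕ => Ideal.Quotient.mk I (monomial s 1)) '' {s | s.degree < D}
  have hS : S.Finite := (Finsupp.finite_of_degree_lt D).image _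
  let M := Submodule.span (MvPolynomial ι K) S
  have key : ∀ e : ℕ, ∀ p : MvPolynomial σ K, p.IsHomogeneous e →
      Ideal.Quotient.mk I p ∈ M := by
    intro e
    induction e using Nat.strong_induction_on with
    | _ e ih =>
    intro p hp
    by_cases he : e < D
    · rw [p.as_sum, map_sum]
      refine Submodule.sum_mem _ fun s hs => ?_
      have hdeg : s.degree = e := by
        by_contra h
        exact (mem_support_iff.1 hs) (hp.coeff_eq_zero h)
      have hmon : Ideal.Quotient.mk I (monomial s (coeff s p)) =
          (C (coeff s p) : MvPolynomial ι K) • Ideal.Quotient.mk I (monomial s 1) := by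
        rw [hsmul, show φ (C (coeff s p)) = Ideal.Quotient.mk I (C (coeff s p)) from
          φ.commutes _, ← map_mul, C_mul_monomial, mul_one]
      rw [hmon]
      exact M.smul_mem _ (Submodule.subset_span ⟨s, by simpa [hdeg] using he, rfl⟩)
    · have hNe : N ≤ e := (le_max_left N d).trans (not_lt.1 he)
      have hde : d ≤ e := (le_max_right N d).trans (not_lt.1 he)
      have hpJ : p ∈ I ⊔ Ideal.span (Set.range f) := by
        apply hN
        rw [mem_pow_idealOfVars_iff']
        intro s hs
        exact hp.coeff_eq_zero (by omega)
      obtain ⟨q, hq, r, hr, hqr⟩ := Submodule.mem_sup.1 hpJ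
      obtain ⟨g, hg⟩ := (Ideal.mem_span_range_iff_exists_fun).1 hr
      -- Comparing degree `e` parts makes the cofactors homogeneous of smaller degree.
      have hpe : p = homogeneousComponent e q +
          ∑ i, homogeneousComponent (e - d) (g i) * f i := by
        rw [← homogeneousComponent_eq_self hp]
        conv_lhs => rw [← hqr, ← hg, map_add, map_sum]
        simp_rw [homogeneousComponent_mul_of_isHomogeneous (hf _) hde]
      have hq0 : Ideal.Quotient.mk I (homogeneousComponent e q) = 0 :=
        Ideal.Quotient.eq_zero_iff_mem.2 (homogeneousComponent_mem_of_mem hI hq e)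
      rw [hpe, map_add, hq0, zero_add, map_sum]
      refine Submodule.sum_mem _ fun i _ => ?_
      have hX : Ideal.Quotient.mk I (homogeneousComponent (e - d) (g i) * f i) =
          (X i : MvPolynomial ι K) •
            Ideal.Quotient.mk I (homogeneousComponent (e - d) (g i)) := by
        rw [hsmul, show φ (X i) = Ideal.Quotient.mk I (f i) from aeval_X _ i, map_mul, mul_comm]
      rw [hX]
      exact M.smul_mem _ (ih (e - d) (by omega) _ (homogeneousComponent_isHomogeneous _ _))
  have hM : M = ⊤ := by
    refine eq_top_iff.2 fun a _ => ?_
    obtain ⟨p, rfl⟩ := Ideal.Quotient.mk_surjective a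
    rw [← sum_homogeneousComponent p, map_sum]
    exact Submodule.sum_mem _ fun i _ => key i _ (homogeneousComponent_isHomogeneous _ _)
  exact (⟨⟨hS.toFinset, by rw [hS.coe_toFinset]; exact hM⟩⟩ :
    Module.Finite (MvPolynomial ι K) (MvPolynomial σ K ⧸ I))

theorem isHomogeneous_det {σ K ι : Type*} [CommRing K] [Fintype ι] [DecidableEq ι]
    (A : Matrix ι ι (MvPolynomial σ K)) {e : ℕ} (hA : ∀ i j, (A i j).IsHomogeneous e) :
    A.det.IsHomogeneous (Fintype.card ι * e) := by
  rw [Matrix.det_apply]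
  refine IsHomogeneous.sum _ _ _ fun τ _ => ?_
  have h : (∏ i, A (τ i) i).IsHomogeneous (Fintype.card ι * e) := by
    have := IsHomogeneous.prod Finset.univ (fun i => A (τ i) i) (fun _ => e) fun i _ => hA _ _
    simpa using this
  rcases Int.units_eq_one_or (Equiv.Perm.sign τ) with h1 | h1
  · simpa [h1] using h
  · simpa [h1] using h.neg

theorem birchSingularIdeal_isHomogeneous {n R d : ℕ} (F : Fin R → MvPolynomial (Fin n) ℤ)
    (hhom : ∀ i, (F i).IsHomogeneous d) :
    (birchSingularIdeal n R F).IsHomogeneous (homogeneousSubmodule (Fin n) ℂ) := by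
  refine Ideal.homogeneous_span _ _ ?_
  rintro _ ⟨c, -, rfl⟩
  exact ⟨_, isHomogeneous_det _ (e := d - 1) fun i k => ((hhom i).map _).pderiv⟩

end MvPolynomial

/-- If a system of forms `F₁,…,F_R` of degree `d` in `n` variables over `ℤ` is
non-singular (the Jacobian has rank `R` at every nonzero complex zero of the system),
then the Birch singular locus has dimension at most `R` (stated as: the Krull dimension
of its affine coordinate ring is at most `R`). -/
theorem birch_singular_locus_dim_le (n R d : ℕ) (hd : 2 ≤ d)
    (F : Fin R → MvPolynomial (Fin n) ℤ)
    (hhom : ∀ i, (F i).IsHomogeneous d)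
    (hns : ∀ x : Fin n → ℂ, x ≠ 0 → (∀ i, MvPolynomial.eval x (complexify (F i)) = 0) →
      Matrix.rank (Matrix.of fun (i : Fin R) (j : Fin n) =>
        MvPolynomial.eval x (MvPolynomial.pderiv j (complexify (F i)))) = R) :
    ringKrullDim (MvPolynomial (Fin n) ℂ ⧸ birchSingularIdeal n R F) ≤ (R : WithBot (WithTop ℕ)) := by
  have hfin : ∃ N, MvPolynomial.idealOfVars (Fin n) ℂ ^ N ≤
      birchSingularIdeal n R F ⊔ Ideal.span (Set.range fun i => complexify (F i)) := by
    refine MvPolynomial.exists_pow_idealOfVars_le _ fun x hx => ?_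
    by_contra hx0
    have hF : ∀ i, MvPolynomial.eval x (complexify (F i)) = 0 := fun i =>
      hx _ (Ideal.mem_sup_right (Ideal.subset_span ⟨i, rfl⟩))
    obtain ⟨c, hc, hdet⟩ := Matrix.exists_submatrix_det_ne_zero _ (hns x hx0 hF)
    refine hdet ?_
    have h := hx _ (Ideal.mem_sup_left (Ideal.subset_span ⟨c, hc, rfl⟩))
    rw [RingHom.map_det] at h
    exact h
  obtain ⟨N, hN⟩ := hfin
  have h := ringKrullDim_le_of_finite _ (MvPolynomial.finite_aeval_mk _
    (MvPolynomial.birchSingularIdeal_isHomogeneous F hhom) (fun i => complexify (F i))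
    (show 0 < d by omega) (fun i => (hhom i).map _) hN)
  rw [MvPolynomial.ringKrullDim_of_isNoetherianRing, ringKrullDim_eq_zero_of_field, zero_add,
    Nat.card_fin] at h
  exact h
end

section
/- Fiber-dimension bound for the singular locus decomposition: let F₁,…,F_R be forms in n variables, m < n, let Y = {x ∈ 𝔸^n : rank(∂F_i/∂x_j(x))_{1≤i≤R, m+1≤j≤n} < R}, and for β ∈ ℙ^{R−1}_ℂ let Y_β = {x ∈ 𝔸^n : Σ_i β_i (∂F_i/∂x_{m+1}(x),…,∂F_i/∂x_n(x)) = 0}. Then dim Y ≤ R + max_{β ∈ ℙ^{R−1}_ℂ} dim Y_β. -/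
/-- The ideal cutting out `Y = {x : rank (∂F_i/∂x_j)_{1≤i≤R, m+1≤j≤n} < R}`, generated
by all `R × R` minors of the truncated Jacobian (columns `j > m`). -/
noncomputable def truncatedJacobianIdeal (n m R : ℕ)
    (F : Fin R → MvPolynomial (Fin n) ℤ) : Ideal (MvPolynomial (Fin n) ℂ) :=
  Ideal.span { g | ∃ c : Fin R → Fin n, Function.Injective c ∧ (∀ k, m ≤ (c k : ℕ)) ∧
      g = Matrix.det (Matrix.of fun i k : Fin R =>
            MvPolynomial.pderiv (c k) (complexify (F i))) }

/-- The ideal cutting out `Y_β = {x : Σ_i β_i (∂F_i/∂x_{m+1}(x),…,∂F_i/∂x_n(x)) = 0}`. -/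
noncomputable def truncatedGradientIdeal (n m R : ℕ)
    (F : Fin R → MvPolynomial (Fin n) ℤ) (β : Fin R → ℂ) :
    Ideal (MvPolynomial (Fin n) ℂ) :=
  Ideal.span { g | ∃ j : Fin n, m ≤ (j : ℕ) ∧
      g = ∑ i, MvPolynomial.C (β i) * MvPolynomial.pderiv j (complexify (F i)) }


/-- Every closed point of affine `s`-space has height `s`: some maximal ideal attains the Krull
dimension, it is a point by the Nullstellensatz, and translations move it to any other point. -/
lemma height_point {s : ℕ} (p : Fin s → ℂ) :
    ((MvPolynomial.vanishingIdeal ℂ {p}).height : WithBot ℕ∞) = s := by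
  have hdim : ringKrullDim (MvPolynomial (Fin s) ℂ) = s := by
    rw [MvPolynomial.ringKrullDim_of_isNoetherianRing]; simp
  have : FiniteRingKrullDim (MvPolynomial (Fin s) ℂ) := by
    rw [finiteRingKrullDim_iff_ne_bot_and_top, hdim]
    exact ⟨WithBot.coe_ne_bot, fun h => ENat.natCast_ne_top s (WithBot.coe_injective h)⟩
  obtain ⟨m, hm, hmh⟩ := Ideal.exists_isMaximal_height (R := MvPolynomial (Fin s) ℂ)
  obtain ⟨x, rfl⟩ := MvPolynomial.isMaximal_iff_eq_vanishingIdeal_singleton.1 hm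
  -- `e` is the translation taking the point `p` to `x`.
  let tr : (Fin s → ℂ) → MvPolynomial (Fin s) ℂ →ₐ[ℂ] MvPolynomial (Fin s) ℂ :=
    fun a => MvPolynomial.aeval fun i => MvPolynomial.X i + MvPolynomial.C (a i)
  let e : MvPolynomial (Fin s) ℂ ≃ₐ[ℂ] MvPolynomial (Fin s) ℂ :=
    AlgEquiv.ofAlgHom (tr (x - p)) (tr (p - x))
      (by ext i : 1; simp [tr, MvPolynomial.algebraMap_eq]; ring)
      (by ext i : 1; simp [tr, MvPolynomial.algebraMap_eq]; ring)
  rw [← hdim, ← hmh, ← RingEquiv.height_comap e.toRingEquiv]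
  congr 2
  ext g
  simp only [Ideal.mem_comap, MvPolynomial.mem_vanishingIdeal_singleton_iff]
  have : MvPolynomial.aeval p (tr (x - p) g) = MvPolynomial.aeval x g := by
    rw [← AlgHom.comp_apply]; congr 1; ext i; simp [tr]
  rw [← this]; rfl

/-- On an affine variety over `ℂ`, some closed point off the hypersurface `f = 0` has full local
dimension. Noether normalization makes `C` integral over a polynomial ring; a point of affine space
off the zero locus of a nonzero multiple of `f` lifts to `C` by lying over, and going-down shows
that the height does not drop. -/
lemma exists_isMaximal_notMem_height (C : Type*) [CommRing C] [IsDomain C] [Algebra ℂ C]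
    [Algebra.FiniteType ℂ C] (f : C) (hf : f ≠ 0) :
    ∃ m : Ideal C, m.IsMaximal ∧ f ∉ m ∧ ringKrullDim C ≤ m.height := by
  obtain ⟨s, g, hg, hint⟩ := exists_integral_inj_algHom_of_fg ℂ C
  algebraize [g.toRingHom]
  have : IsNoetherianRing C := Algebra.FiniteType.isNoetherianRing ℂ C
  have : Algebra.IsIntegral (MvPolynomial (Fin s) ℂ) C := ⟨hint⟩
  have hinj : Function.Injective (algebraMap (MvPolynomial (Fin s) ℂ) C) := hg
  have : FaithfulSMul (MvPolynomial (Fin s) ℂ) C := (faithfulSMul_iff_algebraMap_injective _ _).2 hinj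
  have hdim : ringKrullDim (MvPolynomial (Fin s) ℂ) = s := by
    rw [MvPolynomial.ringKrullDim_of_isNoetherianRing]; simp
  have hle : ringKrullDim C ≤ s := by
    rw [← hdim]
    refine Order.krullDim_le_of_strictMono
      (PrimeSpectrum.comap (algebraMap (MvPolynomial (Fin s) ℂ) C)) fun I J h => ?_
    exact Ideal.IsIntegral.comap_lt_comap h
  -- `q` is a nonzero polynomial in `t₁, …, tₛ` that is a multiple of `f` in `C`.
  obtain ⟨q, hq, hq0⟩ := Submodule.exists_mem_ne_zero_of_ne_bot
    (Ideal.comap_ne_bot_of_integral_mem (R := MvPolynomial (Fin s) ℂ) hf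
      (Ideal.mem_span_singleton_self f) (Algebra.IsIntegral.isIntegral f))
  obtain ⟨p, hp⟩ : ∃ p, MvPolynomial.eval p q ≠ 0 := by
    by_contra! h
    exact hq0 (MvPolynomial.funext fun x => by simpa using h x)
  have hn : (MvPolynomial.vanishingIdeal ℂ {p}).IsMaximal := inferInstance
  obtain ⟨m, hm, hmn⟩ := Ideal.exists_ideal_over_maximal_of_isIntegral (S := C)
    (MvPolynomial.vanishingIdeal ℂ {p}) (by
      rw [(RingHom.injective_iff_ker_eq_bot _).1 hinj]; exact bot_le)
  refine ⟨m, hm, fun hfm => ?_, ?_⟩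
  · have : q ∈ MvPolynomial.vanishingIdeal ℂ {p} := by
      rw [← hmn]
      exact (Ideal.span_singleton_le_iff_mem _).2 hfm hq
    rw [MvPolynomial.mem_vanishingIdeal_singleton_iff] at this
    exact hp (by rwa [MvPolynomial.aeval_eq_eval] at this)
  · have : m.LiesOver (MvPolynomial.vanishingIdeal ℂ {p}) := ⟨hmn.symm⟩
    refine hle.trans ?_
    rw [← height_point p, Ideal.height_eq_height_add_of_liesOver_of_hasGoingDown
      (MvPolynomial.vanishingIdeal ℂ {p}) m]
    exact_mod_cast le_self_add

/-- A matrix with `R` rows over a domain all of whose `R × R` minors vanish has a nontrivial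
relation between its rows, with coefficients in the domain. -/
lemma exists_vecMul_eq_zero {C : Type*} [CommRing C] [IsDomain C] {R : ℕ} {J : Type*} [Fintype J]
    (M : Matrix (Fin R) J C)
    (h : ∀ c : Fin R → J, Function.Injective c → (M.submatrix id c).det = 0) :
    ∃ β : Fin R → C, β ≠ 0 ∧ Matrix.vecMul β M = 0 := by
  classical
  let K := FractionRing C
  let N : Matrix (Fin R) J K := M.map (algebraMap C K)
  have hdep : ¬ LinearIndependent C M.row := by
    intro hli
    have hli' : LinearIndependent K N.row := by
      rw [← LinearIndependent.iff_fractionRing (R := C) (K := K)]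
      rw [Fintype.linearIndependent_iff] at hli ⊢
      intro g hg
      refine hli g (funext fun j => IsFractionRing.injective C K ?_)
      have := congrFun hg j
      simpa [N, Algebra.smul_def] using this
    have hrank : N.rank = R := by simpa using hli'.rank_matrix
    -- The columns span `K ^ R`, so `R` of them form a basis; their minor is then nonzero.
    have hcols := Submodule.exists_fun_fin_finrank_span_eq K (Set.range N.col)
    rw [← Matrix.rank_eq_finrank_span_cols, hrank] at hcols
    obtain ⟨c', hc', -, hcli⟩ := hcols
    choose c hc using hc'
    have hcinj : Function.Injective c := fun a b hab => hcli.injective (by rw [← hc, ← hc, hab])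
    have hu : IsUnit (N.submatrix id c) := by
      rw [← Matrix.linearIndependent_cols_iff_isUnit]
      have hcol : (N.submatrix id c).col = c' := funext fun i => by rw [← hc]; rfl
      rwa [hcol]
    rw [Matrix.isUnit_iff_isUnit_det] at hu
    have : (N.submatrix id c).det = algebraMap C K (M.submatrix id c).det := by
      rw [RingHom.map_det]; rfl
    rw [this, h c hcinj, map_zero] at hu
    exact not_isUnit_zero hu
  rw [Fintype.not_linearIndependent_iff] at hdep
  obtain ⟨β, hβ, i, hi⟩ := hdep
  refine ⟨β, fun h0 => hi (by simp [h0]), ?_⟩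
  rw [Matrix.vecMul_eq_sum]
  exact hβ

/-- The bound for a single irreducible closed subset `V(P)` of `Y`. If `β(y)` is a relation between
the rows of the Jacobian over `V(P)`, then near a point `y₀` where `β(y₀) ≠ 0` the `R` equations
`β(y) = β(y₀)` cut out of `V(P)` a subset of `Y_{β(y₀)}`. -/
lemma ringKrullDim_quotient_prime_le {n m R : ℕ} (F : Fin R → MvPolynomial (Fin n) ℤ)
    (D : WithBot ℕ∞)
    (hD : ∀ β : Fin R → ℂ, β ≠ 0 →
      ringKrullDim (MvPolynomial (Fin n) ℂ ⧸ truncatedGradientIdeal n m R F β) ≤ D)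
    (P : Ideal (MvPolynomial (Fin n) ℂ)) [P.IsPrime] (hP : truncatedJacobianIdeal n m R F ≤ P) :
    ringKrullDim (MvPolynomial (Fin n) ℂ ⧸ P) ≤ R + D := by
  let π := Ideal.Quotient.mk P
  obtain ⟨β, hβ, hβM⟩ := exists_vecMul_eq_zero
    (Matrix.of fun (i : Fin R) (j : {j : Fin n // m ≤ (j : ℕ)}) =>
      π (MvPolynomial.pderiv j.1 (complexify (F i)))) (by
    intro c hc
    have hmem : Matrix.det (Matrix.of fun i k : Fin R =>
        MvPolynomial.pderiv (c k).1 (complexify (F i))) ∈ P :=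
      hP (Ideal.subset_span ⟨fun k => (c k).1, Subtype.val_injective.comp hc,
        fun k => (c k).2, rfl⟩)
    rw [← Ideal.Quotient.eq_zero_iff_mem, RingHom.map_det] at hmem
    exact hmem)
  obtain ⟨i₀, hi₀⟩ := Function.ne_iff.1 hβ
  obtain ⟨M, hM, hfM, hdim⟩ := exists_isMaximal_notMem_height _ (β i₀) hi₀
  have hMc : (M.comap π).IsMaximal :=
    Ideal.comap_isMaximal_of_surjective π Ideal.Quotient.mk_surjective
  obtain ⟨x, hx⟩ := MvPolynomial.isMaximal_iff_eq_vanishingIdeal_singleton.1 hMc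
  choose b hb using fun i => Ideal.Quotient.mk_surjective (β i)
  -- `c` is the value of `β` at the point `x` of `V(P)` defined by `M`.
  let c : Fin R → ℂ := fun i => MvPolynomial.eval x (b i)
  have hcM : ∀ i, β i - π (MvPolynomial.C (c i)) ∈ M := by
    intro i
    have : b i - MvPolynomial.C (c i) ∈ M.comap π := by
      rw [hx, MvPolynomial.mem_vanishingIdeal_singleton_iff, MvPolynomial.aeval_eq_eval]
      simp [c]
    rw [← hb i]
    simpa [π] using this
  have hc : c ≠ 0 := by
    intro h0
    have := hcM i₀
    rw [h0] at this
    exact hfM (by simpa using this)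
  let S : Set (MvPolynomial (Fin n) ℂ ⧸ P) := Set.range fun i => β i - π (MvPolynomial.C (c i))
  have hS : S.encard ≤ R := by
    have := Set.encard_image_le (fun i => β i - π (MvPolynomial.C (c i))) Set.univ
    simpa [S] using this
  let ψ := (Ideal.Quotient.mk (Ideal.span S)).comp π
  have hψ : ∀ a ∈ truncatedGradientIdeal n m R F c, ψ a = 0 := by
    intro a ha
    suffices truncatedGradientIdeal n m R F c ≤ RingHom.ker ψ from this ha
    refine Ideal.span_le.2 ?_
    rintro _ ⟨j, hj, rfl⟩
    have h1 : ∑ i, β i * π (MvPolynomial.pderiv j (complexify (F i))) = 0 :=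
      congrFun hβM ⟨j, hj⟩
    have h2 : ∀ i, ψ (MvPolynomial.C (c i)) = Ideal.Quotient.mk (Ideal.span S) (β i) := by
      intro i
      refine (Ideal.Quotient.eq.2 ?_).symm
      exact Ideal.subset_span ⟨i, rfl⟩
    have h3 := congrArg (Ideal.Quotient.mk (Ideal.span S)) h1
    simp only [map_sum, map_mul, map_zero] at h3
    simp only [SetLike.mem_coe, RingHom.mem_ker, map_sum, map_mul, h2]
    exact h3
  have hsurj : Function.Surjective (Ideal.Quotient.lift _ ψ hψ) :=
    Ideal.Quotient.lift_surjective_of_surjective _ _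
      (Ideal.Quotient.mk_surjective.comp Ideal.Quotient.mk_surjective)
  calc ringKrullDim (MvPolynomial (Fin n) ℂ ⧸ P) ≤ M.height := hdim
    _ ≤ ringKrullDim ((MvPolynomial (Fin n) ℂ ⧸ P) ⧸ Ideal.span S) + S.encard :=
        Ideal.height_le_ringKrullDim_quotient_add_encard S (by rintro _ ⟨i, rfl⟩; exact hcM i)
    _ ≤ D + R := add_le_add ((ringKrullDim_le_of_surjective _ hsurj).trans (hD c hc))
        (by exact_mod_cast hS)
    _ = R + D := add_comm _ _

/-- The dimension of `V(I)` is bounded through its irreducible closed subsets: a chain of primes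
over `I` is a chain over its smallest member. -/
lemma ringKrullDim_quotient_le_of_forall_prime {A : Type*} [CommRing A] (I : Ideal A)
    (B : WithBot ℕ∞)
    (h : ∀ P : Ideal A, P.IsPrime → I ≤ P → ringKrullDim (A ⧸ P) ≤ B) :
    ringKrullDim (A ⧸ I) ≤ B := by
  rw [ringKrullDim_quotient]
  refine iSup_le fun l => ?_
  refine le_trans ?_ (h l.head.1.asIdeal l.head.1.isPrime l.head.2)
  rw [ringKrullDim_quotient]
  let l' : LTSeries (PrimeSpectrum.zeroLocus (R := A) l.head.1.asIdeal) :=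
    { length := l.length
      toFun := fun i => ⟨(l i).1, LTSeries.head_le l i⟩
      step := fun i => l.step i }
  exact le_iSup (fun q : LTSeries _ => (q.length : WithBot ℕ∞)) l'

/-- Fiber-dimension bound for the singular-locus decomposition: for forms `F₁,…,F_R`
of degree `d ≥ 2` in `n` variables and `m < n`,
`dim Y ≤ R + max_{β ∈ ℙ^{R−1}} dim Y_β`, stated as: any common upper bound `D` for the
dimensions of all the `Y_β` (`β ≠ 0`) yields the bound `dim Y ≤ R + D`. Dimensions are
Krull dimensions of affine coordinate rings. -/
theorem truncated_jacobian_dim_le (n m R d : ℕ) (hd : 2 ≤ d) (hm : m < n)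
    (F : Fin R → MvPolynomial (Fin n) ℤ)
    (hhom : ∀ i, (F i).IsHomogeneous d)
    (D : WithBot (WithTop ℕ))
    (hD : ∀ β : Fin R → ℂ, β ≠ 0 →
      ringKrullDim (MvPolynomial (Fin n) ℂ ⧸ truncatedGradientIdeal n m R F β) ≤ D) :
    ringKrullDim (MvPolynomial (Fin n) ℂ ⧸ truncatedJacobianIdeal n m R F)
      ≤ (R : WithBot (WithTop ℕ)) + D := by
  exact ringKrullDim_quotient_le_of_forall_prime _ _ fun P _ hP =>
    ringKrullDim_quotient_prime_le F D hD P hP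
end
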